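/- There is an absolute constant K such that for every prime p ≥ 5 and every real X with p⁶ ≤ X, the number of pairs (A,B) ∈ E(X) with p ∣ A, p ∣ B and p² ∤ B (i.e. the elliptic curves y² = x³+Ax+B in the family with Kodaira–Néron type II at p) differs from (1/p²)·(1−1/p)·(p^{10}/(p^{10}−1))·(4/ζ(10))·X^{5/6} by at most K·X^{1/2}, where ζ is the Riemann zeta function. -/

import Mathlib

/-- Condition (M): for every prime `q`, `q⁴ ∣ A` implies `q⁶ ∤ B`. -/
def CondM (A B : ℤ) : Prop := ∀ q : ℕ, q.Prime → (q : ℤ) ^ 4 ∣ A → ¬ (q : ℤ) ^ 6 ∣ B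

/-- The family `E(X)`: pairs `(A,B)` with `4A³+27B² ≠ 0`, naive height at most `X`,
satisfying condition (M). -/
def Efam (X : ℝ) : Set (ℤ × ℤ) :=
  {AB | 4 * AB.1 ^ 3 + 27 * AB.2 ^ 2 ≠ 0 ∧ ((max (|AB.1| ^ 3) (AB.2 ^ 2) : ℤ) : ℝ) ≤ X ∧
        CondM AB.1 AB.2}

/-!
Let `Y = X^(1/3)` and `Z = X^(1/2)`. For `B ≠ 0` the integers `d` with `d⁴ ∣ A` and `d⁶ ∣ B` are the
divisors of a single integer, which is `1` exactly under condition (M), so Möbius inversion writes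
the count as `∑ μ(d) a_d b_d`, where `a_d` and `b_d` count the multiples of `d⁴` and `d⁶` among the
type II coefficients `|A| ≤ Y` and `|B| ≤ Z`. For `p ∣ d` we have `b_d = 0`; otherwise
`a_d = 2Y/(p d⁴) + O(1)` and `b_d = (2Z/(p d⁶))(1 - 1/p) + O(1)`. Since `(Y/d⁴)³ = (Z/d⁶)²`, and
`b_d = 0` for `d⁶ > Z`, the product `a_d b_d` differs from its main term by `O(Z/d⁶)` for every `d`,
so both the sum of the errors and the tail of the main series are `O(Z)`. The main terms form the
series `∑ μ(d)/d¹⁰` over `d` prime to `p`, which is `1/ζ(10)` without its Euler factor at `p`.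
The singular cubics number at most `2Z`, as `B` determines `A`.
-/

open Finset
open scoped ArithmeticFunction.Moebius

/-! ### Integers in a symmetric interval -/

/-- The integers `n` with `|n| ≤ Y`, over which each coefficient of a bounded height model runs. -/
noncomputable def intBall (Y : ℝ) : Finset ℤ := Icc (-⌊Y⌋) ⌊Y⌋

lemma mem_intBall {Y : ℝ} {n : ℤ} : n ∈ intBall Y ↔ |(n : ℝ)| ≤ Y := by
  rw [intBall, mem_Icc, ← abs_le, Int.le_floor, Int.cast_abs]

lemma zero_mem_intBall {Y : ℝ} (hY : 0 ≤ Y) : (0 : ℤ) ∈ intBall Y := by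
  simpa [mem_intBall] using hY

lemma mem_intBall_iff_abs_pow_le {X Y : ℝ} (hY : 0 ≤ Y) {k : ℕ} (hk : k ≠ 0) (hX : Y ^ k = X)
    {n : ℤ} : n ∈ intBall Y ↔ |(n : ℝ)| ^ k ≤ X := by
  rw [mem_intBall, ← hX, pow_le_pow_iff_left₀ (abs_nonneg _) hY hk]

lemma card_intBall {Y : ℝ} (hY : 0 ≤ Y) : (#(intBall Y) : ℝ) = 2 * ⌊Y⌋ + 1 := by
  have hcard : (#(intBall Y) : ℤ) = 2 * ⌊Y⌋ + 1 := by
    have := Int.floor_nonneg.2 hY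
    rw [intBall, Int.card_Icc]
    lia
  exact_mod_cast hcard

lemma card_filter_dvd_intBall (Y : ℝ) {m : ℕ} (hm : 0 < m) :
    #{n ∈ intBall Y | (m : ℤ) ∣ n} = #(intBall (Y / m)) := by
  have hm' : (0 : ℝ) < m := Nat.cast_pos.2 hm
  have himage : {n ∈ intBall Y | (m : ℤ) ∣ n} = (intBall (Y / m)).image ((m : ℤ) * ·) := by
    ext n
    simp only [mem_filter, mem_image, mem_intBall, le_div_iff₀ hm']
    constructor
    · rintro ⟨hn, k, rfl⟩
      refine ⟨k, ?_, rfl⟩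
      simpa [abs_mul, mul_comm] using hn
    · rintro ⟨k, hk, rfl⟩
      refine ⟨?_, dvd_mul_right _ _⟩
      simpa [abs_mul, mul_comm] using hk
  rw [himage, card_image_of_injective _ (mul_right_injective₀ (by exact_mod_cast hm.ne'))]

lemma abs_card_filter_dvd_intBall_sub_le {Y : ℝ} (hY : 0 ≤ Y) {m : ℕ} (hm : 0 < m) :
    |(#{n ∈ intBall Y | (m : ℤ) ∣ n} : ℝ) - 2 * (Y / m)| ≤ 1 := by
  rw [card_filter_dvd_intBall Y hm, card_intBall (by positivity), abs_le]
  constructor <;> linarith [Int.floor_le (Y / m), Int.lt_floor_add_one (Y / m)]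

lemma card_le_two_mul_of_subset_intBall {Z : ℝ} (hZ : 0 ≤ Z) {T : Finset ℤ}
    (hT : T ⊆ intBall Z) (hT0 : 0 ∉ T) : (#T : ℝ) ≤ 2 * Z := by
  have hlt : #T < #(intBall Z) :=
    card_lt_card (ssubset_iff_exists_subset_erase.2
      ⟨0, zero_mem_intBall hZ, subset_erase.2 ⟨hT, hT0⟩⟩)
  have hcard : (#T : ℝ) + 1 ≤ #(intBall Z) := by exact_mod_cast hlt
  linarith [card_intBall hZ, Int.floor_le Z]

lemma filter_dvd_eq_empty_of_subset_intBall {Z : ℝ} {T : Finset ℤ} (hT : T ⊆ intBall Z)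
    (hT0 : 0 ∉ T) {m : ℕ} (hm : Z < m) : {n ∈ T | (m : ℤ) ∣ n} = ∅ := by
  refine filter_eq_empty_iff.2 fun n hn hdvd ↦ hT0 ?_
  have hlt : |n| < (m : ℤ) := by
    exact_mod_cast (mem_intBall.1 (hT hn)).trans_lt hm
  rwa [Int.eq_zero_of_abs_lt_dvd hdvd hlt] at hn

/-! ### Möbius inversion for condition (M) -/

lemma hasSum_ite_dvd_moebius {D : ℕ} (hD : D ≠ 0) :
    HasSum (fun d : ℕ ↦ if d ∣ D then (μ d : ℝ) else 0) (if D = 1 then 1 else 0) := by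
  have hsum : ∑ d ∈ D.divisors, (if d ∣ D then (μ d : ℝ) else 0) = if D = 1 then 1 else 0 := by
    rw [sum_congr rfl fun d hd ↦ if_pos (Nat.dvd_of_mem_divisors hd),
      ← ArithmeticFunction.one_apply, ← ArithmeticFunction.coe_zeta_mul_coe_moebius,
      ArithmeticFunction.coe_zeta_mul_apply]
    rfl
  rw [← hsum]
  refine hasSum_sum_of_ne_finset_zero fun d hd ↦ if_neg fun hdvd ↦ hd ?_
  exact Nat.mem_divisors.2 ⟨hdvd, hD⟩

/-- The largest `d` with `d⁴ ∣ A` and `d⁶ ∣ B`, that is, the factor by which the model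
`y² = x³ + Ax + B` can be scaled down. It is `0` when `A = B = 0`. -/
def scalingFactor (A B : ℤ) : ℕ := (Nat.floorRoot 4 A.natAbs).gcd (Nat.floorRoot 6 B.natAbs)

lemma dvd_scalingFactor_iff {A B : ℤ} {d : ℕ} :
    d ∣ scalingFactor A B ↔ (d : ℤ) ^ 4 ∣ A ∧ (d : ℤ) ^ 6 ∣ B := by
  simp only [scalingFactor, Nat.dvd_gcd_iff, ← Nat.pow_dvd_iff_dvd_floorRoot, ← Int.natCast_dvd,
    Nat.cast_pow]

lemma scalingFactor_ne_zero (A : ℤ) {B : ℤ} (hB : B ≠ 0) : scalingFactor A B ≠ 0 :=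
  Nat.gcd_ne_zero_right (Nat.floorRoot_ne_zero.2 ⟨by norm_num, Int.natAbs_ne_zero.2 hB⟩)

lemma condM_iff_scalingFactor_eq_one {A B : ℤ} : CondM A B ↔ scalingFactor A B = 1 := by
  simp only [CondM, Nat.eq_one_iff_not_exists_prime_dvd, dvd_scalingFactor_iff, not_and]

open Classical in
lemma hasSum_moebius_mul_card_mul_card (S : Finset ℤ) {T : Finset ℤ} (hT : 0 ∉ T) :
    HasSum (fun d : ℕ ↦ (μ d : ℝ) *
        (#{A ∈ S | (d : ℤ) ^ 4 ∣ A} * #{B ∈ T | (d : ℤ) ^ 6 ∣ B}))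
      #{AB ∈ S ×ˢ T | CondM AB.1 AB.2} := by
  have hpair (AB : ℤ × ℤ) (hAB : AB ∈ S ×ˢ T) :
      HasSum (fun d : ℕ ↦ if (d : ℤ) ^ 4 ∣ AB.1 ∧ (d : ℤ) ^ 6 ∣ AB.2 then (μ d : ℝ) else 0)
        (if CondM AB.1 AB.2 then 1 else 0) := by
    have hB : AB.2 ≠ 0 := fun h ↦ hT (h ▸ (mem_product.1 hAB).2)
    simpa only [dvd_scalingFactor_iff, condM_iff_scalingFactor_eq_one] using
      hasSum_ite_dvd_moebius (scalingFactor_ne_zero AB.1 hB)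
  convert! hasSum_sum hpair using 1
  · ext d
    rw [← sum_filter, sum_const, nsmul_eq_mul, mul_comm,
      filter_product (fun A ↦ (d : ℤ) ^ 4 ∣ A) (fun B ↦ (d : ℤ) ^ 6 ∣ B), card_product,
      Nat.cast_mul]
  · exact natCast_card_filter _ _

/-! ### The Möbius Dirichlet series with an Euler factor removed -/

lemma ofReal_re_riemannZeta_natCast {k : ℕ} (hk : 1 < k) :
    ((riemannZeta k).re : ℂ) = riemannZeta k := by
  have hreal : riemannZeta k = ((∑' n : ℕ, 1 / (n : ℝ) ^ k : ℝ) : ℂ) := by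
    rw [zeta_nat_eq_tsum_of_gt_one hk]
    push_cast
    rfl
  rw [hreal, Complex.ofReal_re]

lemma LSeriesHasSum_one_mul_moebius (N : ℕ) [NeZero N] {s : ℂ} (hs : 1 < s.re) :
    LSeriesHasSum (fun d ↦ (1 : DirichletCharacter ℂ N) d * (μ d : ℂ)) s
      (riemannZeta s * ∏ p ∈ N.primeFactors, (1 - (p : ℂ) ^ (-s)))⁻¹ := by
  have hs1 : s ≠ 1 := by
    rintro rfl
    simp at hs
  have hinv := DirichletCharacter.LSeries.mul_mu_eq_one (1 : DirichletCharacter ℂ N) hs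
  rw [← DirichletCharacter.LFunction_eq_LSeries _ hs, ← DirichletCharacter.LFunctionTrivChar,
    DirichletCharacter.LFunctionTrivChar_eq_mul_riemannZeta hs1, mul_comm (∏ _ ∈ _, _)] at hinv
  rw [← eq_inv_of_mul_eq_one_right hinv]
  exact (DirichletCharacter.LSeriesSummable_mul _
    (ArithmeticFunction.LSeriesSummable_moebius_iff.2 hs)).LSeriesHasSum

lemma hasSum_moebius_coprime_div_pow (N : ℕ) [NeZero N] {k : ℕ} (hk : 1 < k) :
    HasSum (fun d : ℕ ↦ (if d.Coprime N then (μ d : ℝ) else 0) / (d : ℝ) ^ k)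
      ((riemannZeta k).re * ∏ p ∈ N.primeFactors, (1 - ((p : ℝ) ^ k)⁻¹))⁻¹ := by
  have hseries := LSeriesHasSum_one_mul_moebius N (s := k) (by simpa using hk)
  rw [LSeriesHasSum] at hseries
  rw [← Complex.hasSum_ofReal]
  convert! hseries using 1
  · ext d
    rcases eq_or_ne d 0 with rfl | hd
    · simp [(zero_lt_one.trans hk).ne']
    rw [LSeries.term_of_ne_zero hd, Complex.cpow_natCast]
    split_ifs with hcop
    · simp [MulChar.one_apply ((ZMod.isUnit_iff_coprime d N).2 hcop)]
    · simp [MulChar.map_nonunit _ (mt (ZMod.isUnit_iff_coprime d N).1 hcop)]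
  · push_cast
    simp only [ofReal_re_riemannZeta_natCast hk, Complex.cpow_neg, Complex.cpow_natCast]

lemma hasSum_moebius_coprime_prime_div_pow {p : ℕ} (hp : p.Prime) {k : ℕ} (hk : 1 < k) :
    HasSum (fun d : ℕ ↦ (if d.Coprime p then (μ d : ℝ) else 0) / (d : ℝ) ^ k)
      ((p : ℝ) ^ k / ((p : ℝ) ^ k - 1) / (riemannZeta k).re) := by
  have : NeZero p := ⟨hp.ne_zero⟩
  have hpk : (p : ℝ) ^ k ≠ 0 := pow_ne_zero k (Nat.cast_ne_zero.2 hp.ne_zero)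
  have hEuler : (p : ℝ) ^ k / ((p : ℝ) ^ k - 1) = (1 - ((p : ℝ) ^ k)⁻¹)⁻¹ := by
    rw [← one_div (_ ^ k), one_sub_div hpk, inv_div]
  rw [hEuler, div_eq_mul_inv, ← mul_inv_rev]
  simpa only [hp.primeFactors, prod_singleton] using hasSum_moebius_coprime_div_pow p hk

/-! ### Coefficients of type II -/

/-- The coefficients `A` with `|A| ≤ Y` allowed by type II at `p`. -/
noncomputable def typeTwoA (p : ℕ) (Y : ℝ) : Finset ℤ := {A ∈ intBall Y | (p : ℤ) ∣ A}

/-- The coefficients `B` with `|B| ≤ Z` allowed by type II at `p`. -/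
noncomputable def typeTwoB (p : ℕ) (Z : ℝ) : Finset ℤ :=
  {B ∈ intBall Z | (p : ℤ) ∣ B ∧ ¬ (p : ℤ) ^ 2 ∣ B}

lemma typeTwoB_subset_intBall (p : ℕ) (Z : ℝ) : typeTwoB p Z ⊆ intBall Z := filter_subset _ _

lemma zero_notMem_typeTwoB (p : ℕ) (Z : ℝ) : 0 ∉ typeTwoB p Z := by
  simp [typeTwoB]

lemma natCast_mul_dvd_iff_of_coprime {a b : ℕ} (hab : a.Coprime b) {n : ℤ} :
    ((a * b : ℕ) : ℤ) ∣ n ↔ (a : ℤ) ∣ n ∧ (b : ℤ) ∣ n := by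
  simp only [Int.natCast_dvd]
  exact ⟨fun h ↦ ⟨dvd_of_mul_right_dvd h, dvd_of_mul_left_dvd h⟩,
    fun h ↦ hab.mul_dvd_of_dvd_of_dvd h.1 h.2⟩

lemma abs_card_filter_dvd_typeTwoA_sub_le {p m : ℕ} (hp : 0 < p) (hm : 0 < m)
    (hmp : m.Coprime p) {Y : ℝ} (hY : 0 ≤ Y) :
    |(#{A ∈ typeTwoA p Y | (m : ℤ) ∣ A} : ℝ) - 2 * (Y / m) / p| ≤ 1 := by
  have hfilter : {A ∈ typeTwoA p Y | (m : ℤ) ∣ A} = {n ∈ intBall Y | ((p * m : ℕ) : ℤ) ∣ n} := by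
    simp only [typeTwoA, filter_filter, natCast_mul_dvd_iff_of_coprime hmp.symm]
  have hmain : 2 * (Y / m) / p = 2 * (Y / (p * m : ℕ)) := by
    push_cast
    field_simp
  rw [hfilter, hmain]
  exact abs_card_filter_dvd_intBall_sub_le hY (by positivity)

lemma abs_card_filter_dvd_typeTwoB_sub_le {p m : ℕ} (hp : 0 < p) (hm : 0 < m)
    (hmp : m.Coprime p) {Z : ℝ} (hZ : 0 ≤ Z) :
    |(#{B ∈ typeTwoB p Z | (m : ℤ) ∣ B} : ℝ) - 2 * (Z / m) / p * (1 - 1 / p)| ≤ 2 := by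
  set S₁ := {n ∈ intBall Z | ((p * m : ℕ) : ℤ) ∣ n} with hS₁
  set S₂ := {n ∈ intBall Z | ((p ^ 2 * m : ℕ) : ℤ) ∣ n} with hS₂
  have hfilter : {B ∈ typeTwoB p Z | (m : ℤ) ∣ B} = S₁ \ S₂ := by
    ext n
    simp only [hS₁, hS₂, typeTwoB, mem_filter, mem_sdiff,
      natCast_mul_dvd_iff_of_coprime hmp.symm,
      natCast_mul_dvd_iff_of_coprime (hmp.symm.pow_left 2), Nat.cast_pow]
    tauto
  have hsub : S₂ ⊆ S₁ := monotone_filter_right _ fun n _ hn ↦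
    (Int.natCast_dvd_natCast.2 (mul_dvd_mul_right (dvd_pow_self p two_ne_zero) m)).trans hn
  have hmain : 2 * (Z / m) / p * (1 - 1 / p) =
      2 * (Z / (p * m : ℕ)) - 2 * (Z / (p ^ 2 * m : ℕ)) := by
    push_cast
    field_simp
  have h₁ := abs_le.1 (abs_card_filter_dvd_intBall_sub_le hZ (m := p * m) (by positivity))
  have h₂ := abs_le.1 (abs_card_filter_dvd_intBall_sub_le hZ (m := p ^ 2 * m) (by positivity))
  rw [hfilter, cast_card_sdiff hsub, hmain, abs_le]
  constructor <;> linarith [h₁.1, h₁.2, h₂.1, h₂.2]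

lemma filter_pow_dvd_typeTwoB_eq_empty {p d : ℕ} (hpd : p ∣ d) {k : ℕ} (hk : 2 ≤ k) (Z : ℝ) :
    {B ∈ typeTwoB p Z | (d : ℤ) ^ k ∣ B} = ∅ := by
  have hdvd : (p : ℤ) ^ 2 ∣ (d : ℤ) ^ k :=
    (pow_dvd_pow_of_dvd (Int.natCast_dvd_natCast.2 hpd) 2).trans (pow_dvd_pow _ hk)
  refine filter_eq_empty_iff.2 fun B hB hB' ↦ ?_
  exact (mem_filter.1 hB).2.2 (hdvd.trans hB')

/-! ### The count of type II pairs -/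

/-- Used with `u = Y / d⁴` and `v = Z / d⁶`. If `v ≥ 1`, then `u ≤ v` and the error terms are
`O(u + v + 1) = O(v)`; if `v < 1`, then `u < 1` and the main term itself is `O(u v) = O(v)`. -/
lemma abs_mul_sub_mul_le_of_pow_three_eq_sq {a b α β u v : ℝ} (ha : |a - α| ≤ 1) (hb : |b - β| ≤ 2)
    (hα : 0 ≤ α) (hαu : α ≤ 2 * u) (hβ : 0 ≤ β) (hβv : β ≤ 2 * v) (huv : u ^ 3 = v ^ 2)
    (hb0 : v < 1 → b = 0) : |a * b - α * β| ≤ 8 * v := by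
  have hu : 0 ≤ u := by linarith
  have hv : 0 ≤ v := by linarith
  rcases lt_or_ge v 1 with hv1 | hv1
  · have hu1 : u ≤ 1 := by
      refine (pow_le_one_iff_of_nonneg hu three_ne_zero).1 ?_
      exact huv ▸ pow_le_one₀ hv hv1.le
    rw [hb0 hv1, mul_zero, zero_sub, abs_neg, abs_of_nonneg (mul_nonneg hα hβ)]
    calc α * β ≤ (2 * 1) * (2 * v) := by gcongr; linarith
      _ ≤ 8 * v := by linarith
  · have huv' : u ≤ v := by
      refine (pow_le_pow_iff_left₀ hu hv three_ne_zero).1 ?_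
      exact huv ▸ pow_le_pow_right₀ hv1 (by norm_num)
    calc |a * b - α * β| = |α * (b - β) + (a - α) * β + (a - α) * (b - β)| := by ring_nf
      _ ≤ |α * (b - β)| + |(a - α) * β| + |(a - α) * (b - β)| := abs_add_three _ _ _
      _ = α * |b - β| + |a - α| * β + |a - α| * |b - β| := by
        rw [abs_mul, abs_mul, abs_mul, abs_of_nonneg hα, abs_of_nonneg hβ]
      _ ≤ α * 2 + 1 * β + 1 * 2 := by gcongr
      _ ≤ 8 * v := by linarith

section TypeTwo

variable {p : ℕ} {Y Z : ℝ}

lemma abs_card_mul_card_sub_le {d : ℕ} (hp : 0 < p) (hd : 0 < d) (hdp : d.Coprime p)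
    (hY : 0 ≤ Y) (hZ : 0 ≤ Z) (hYZ : Y ^ 3 = Z ^ 2) :
    |(#{A ∈ typeTwoA p Y | (d : ℤ) ^ 4 ∣ A} * #{B ∈ typeTwoB p Z | (d : ℤ) ^ 6 ∣ B} : ℝ) -
        1 / (p : ℝ) ^ 2 * (1 - 1 / p) * (4 * (Y * Z)) / (d : ℝ) ^ 10| ≤ 8 * (Z / (d : ℝ) ^ 6) := by
  have hp1 : (1 : ℝ) ≤ p := Nat.one_le_cast.2 hp
  have hinv0 : 0 ≤ 1 - 1 / (p : ℝ) := sub_nonneg.2 ((div_le_one₀ (by positivity)).2 hp1)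
  have hinv1 : 1 - 1 / (p : ℝ) ≤ 1 := sub_le_self 1 (by positivity)
  have hA := abs_card_filter_dvd_typeTwoA_sub_le hp (pow_pos hd 4) (hdp.pow_left 4) hY
  have hB := abs_card_filter_dvd_typeTwoB_sub_le hp (pow_pos hd 6) (hdp.pow_left 6) hZ
  have hB0 : Z / (d : ℝ) ^ 6 < 1 → (#{B ∈ typeTwoB p Z | (d : ℤ) ^ 6 ∣ B} : ℝ) = 0 := by
    intro hlt
    have hempty := filter_dvd_eq_empty_of_subset_intBall (typeTwoB_subset_intBall p Z)
      (zero_notMem_typeTwoB p Z) (m := d ^ 6)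
      (by push_cast; exact (div_lt_one (by positivity)).1 hlt)
    push_cast at hempty
    rw [hempty, card_empty, Nat.cast_zero]
  have hmain : 1 / (p : ℝ) ^ 2 * (1 - 1 / p) * (4 * (Y * Z)) / (d : ℝ) ^ 10 =
      2 * (Y / (d : ℝ) ^ 4) / p * (2 * (Z / (d : ℝ) ^ 6) / p * (1 - 1 / p)) := by
    field_simp
    ring
  push_cast at hA hB
  rw [hmain]
  refine abs_mul_sub_mul_le_of_pow_three_eq_sq hA hB (by positivity)
    (div_le_self (by positivity) hp1) (by positivity) ?_ (by rw [div_pow, div_pow, hYZ]; ring) hB0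
  exact (mul_le_of_le_one_right (by positivity) hinv1).trans (div_le_self (by positivity) hp1)

open Classical in
/-- The pairs `(A, B)` with `|A| ≤ Y` and `|B| ≤ Z` that satisfy condition (M) and are of type II
at `p`; singular cubics are not excluded. -/
noncomputable def typeTwoPairs (p : ℕ) (Y Z : ℝ) : Finset (ℤ × ℤ) :=
  {AB ∈ typeTwoA p Y ×ˢ typeTwoB p Z | CondM AB.1 AB.2}

lemma abs_card_typeTwoPairs_sub_le (hp : p.Prime) (hY : 0 ≤ Y) (hZ : 0 ≤ Z)
    (hYZ : Y ^ 3 = Z ^ 2) :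
    |(#(typeTwoPairs p Y Z) : ℝ) - 1 / (p : ℝ) ^ 2 * (1 - 1 / p) * (4 * (Y * Z)) *
        ((p : ℝ) ^ 10 / ((p : ℝ) ^ 10 - 1) / (riemannZeta 10).re)| ≤
      8 * (Z * ∑' d : ℕ, ((d : ℝ) ^ 6)⁻¹) := by
  have hcount := hasSum_moebius_mul_card_mul_card (typeTwoA p Y) (zero_notMem_typeTwoB p Z)
  have hseries := hasSum_moebius_coprime_prime_div_pow hp (k := 10) (by norm_num)
  have herror : HasSum (fun d : ℕ ↦ 8 * (Z * ((d : ℝ) ^ 6)⁻¹))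
      (8 * (Z * ∑' d : ℕ, ((d : ℝ) ^ 6)⁻¹)) :=
    ((Real.summable_nat_pow_inv.2 (by norm_num)).hasSum.mul_left Z).mul_left 8
  refine (hcount.sub (hseries.mul_left _)).norm_le_of_bounded herror fun d ↦ ?_
  rw [Real.norm_eq_abs]
  split_ifs with hdp
  · rcases d.eq_zero_or_pos with rfl | hd
    · simp
    have hμ : |(μ d : ℝ)| ≤ 1 := by exact_mod_cast ArithmeticFunction.abs_moebius_le_one
    rw [mul_div_assoc', mul_comm _ (μ d : ℝ), mul_div_assoc, ← mul_sub, abs_mul]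
    exact (mul_le_of_le_one_left (abs_nonneg _) hμ).trans
      (abs_card_mul_card_sub_le hp.pos hd hdp hY hZ hYZ)
  · have hpd : p ∣ d := by rwa [Nat.coprime_comm, hp.coprime_iff_not_dvd, not_not] at hdp
    rw [filter_pow_dvd_typeTwoB_eq_empty hpd (by norm_num)]
    simp only [card_empty, Nat.cast_zero, mul_zero, zero_div, sub_zero, abs_zero]
    positivity

/-- For each `B` at most one `A` makes the discriminant vanish. -/
lemma card_filter_disc_eq_zero_le (p : ℕ) (Y : ℝ) (hZ : 0 ≤ Z) :
    (#{AB ∈ typeTwoPairs p Y Z | 4 * AB.1 ^ 3 + 27 * AB.2 ^ 2 = 0} : ℝ) ≤ 2 * Z := by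
  have hcard : #{AB ∈ typeTwoPairs p Y Z | 4 * AB.1 ^ 3 + 27 * AB.2 ^ 2 = 0} ≤
      #(typeTwoB p Z) := by
    refine card_le_card_of_injOn Prod.snd ?_ ?_
    · intro AB hAB
      simp only [coe_filter, Set.mem_ofPred_eq, typeTwoPairs, mem_filter, mem_product] at hAB
      exact hAB.1.1.2
    · rintro ⟨A, B⟩ hAB ⟨A', B'⟩ hAB' (rfl : B = B')
      have hdisc : 4 * A ^ 3 + 27 * B ^ 2 = 0 := (mem_filter.1 hAB).2
      have hdisc' : 4 * A' ^ 3 + 27 * B ^ 2 = 0 := (mem_filter.1 hAB').2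
      have hcube : A ^ 3 = A' ^ 3 := by linarith
      rw [Odd.pow_injective (by decide : Odd 3) hcube]
  exact (Nat.cast_le.2 hcard).trans (card_le_two_mul_of_subset_intBall hZ
    (typeTwoB_subset_intBall p Z) (zero_notMem_typeTwoB p Z))

lemma setOf_mem_Efam_typeTwo_eq (p : ℕ) {X : ℝ} (hY : 0 ≤ Y) (hZ : 0 ≤ Z) (hYX : Y ^ 3 = X)
    (hZX : Z ^ 2 = X) :
    {AB ∈ Efam X | (p : ℤ) ∣ AB.1 ∧ (p : ℤ) ∣ AB.2 ∧ ¬ (p : ℤ) ^ 2 ∣ AB.2} =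
      ({AB ∈ typeTwoPairs p Y Z | ¬ 4 * AB.1 ^ 3 + 27 * AB.2 ^ 2 = 0} : Finset (ℤ × ℤ)) := by
  ext ⟨A, B⟩
  simp only [Efam, typeTwoPairs, typeTwoA, typeTwoB, Set.mem_ofPred_eq, coe_filter, mem_filter,
    mem_product, mem_intBall_iff_abs_pow_le hY three_ne_zero hYX,
    mem_intBall_iff_abs_pow_le hZ two_ne_zero hZX, sq_abs, Int.cast_max, max_le_iff,
    Int.cast_pow, Int.cast_abs]
  tauto

lemma abs_ncard_typeTwo_sub_le (p : ℕ) {X : ℝ} (hY : 0 ≤ Y) (hZ : 0 ≤ Z) (hYX : Y ^ 3 = X)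
    (hZX : Z ^ 2 = X) :
    |({AB ∈ Efam X | (p : ℤ) ∣ AB.1 ∧ (p : ℤ) ∣ AB.2 ∧ ¬ (p : ℤ) ^ 2 ∣ AB.2}.ncard : ℝ) -
      #(typeTwoPairs p Y Z)| ≤ 2 * Z := by
  rw [setOf_mem_Efam_typeTwo_eq p hY hZ hYX hZX, Set.ncard_coe_finset,
    ← card_filter_add_card_filter_not (s := typeTwoPairs p Y Z)
      (fun AB ↦ 4 * AB.1 ^ 3 + 27 * AB.2 ^ 2 = 0), Nat.cast_add, sub_add_cancel_right, abs_neg,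
    Nat.abs_cast]
  exact card_filter_disc_eq_zero_le p Y hZ

end TypeTwo

theorem stmt_16_general :
    ∃ K : ℝ, 0 < K ∧ ∀ (p : ℕ), p.Prime → ∀ (X : ℝ), 0 ≤ X →
      |({AB ∈ Efam X | (p : ℤ) ∣ AB.1 ∧ (p : ℤ) ∣ AB.2 ∧ ¬ (p : ℤ) ^ 2 ∣ AB.2}.ncard : ℝ)
          - (1 / (p : ℝ) ^ 2) * (1 - 1 / (p : ℝ)) * ((p : ℝ) ^ 10 / ((p : ℝ) ^ 10 - 1))
            * (4 / (riemannZeta 10).re) * X ^ ((5 : ℝ) / 6)|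
        ≤ K * X ^ ((1 : ℝ) / 2) := by
  refine ⟨2 + 8 * ∑' d : ℕ, ((d : ℝ) ^ 6)⁻¹,
    add_pos_of_pos_of_nonneg two_pos (mul_nonneg (by norm_num) (tsum_nonneg fun d ↦ by positivity)),
    fun p hp X hX ↦ ?_⟩
  set Y := X ^ ((1 : ℝ) / 3) with hY
  set Z := X ^ ((1 : ℝ) / 2) with hZ
  have hY0 : 0 ≤ Y := by positivity
  have hZ0 : 0 ≤ Z := by positivity
  have hYX : Y ^ 3 = X := by rw [hY, ← Real.rpow_mul_natCast hX]; norm_num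
  have hZX : Z ^ 2 = X := by rw [hZ, ← Real.rpow_mul_natCast hX]; norm_num
  have hYZ : X ^ ((5 : ℝ) / 6) = Y * Z := by
    rw [hY, hZ, ← Real.rpow_add_of_nonneg hX (by norm_num) (by norm_num)]
    norm_num
  have hsingular := abs_ncard_typeTwo_sub_le p hY0 hZ0 hYX hZX
  have hcount := abs_card_typeTwoPairs_sub_le hp hY0 hZ0 (hYX.trans hZX.symm)
  rw [hYZ]
  calc
    _ ≤ _ := abs_sub_le _ (#(typeTwoPairs p Y Z) : ℝ) _
    _ ≤ 2 * Z + 8 * (Z * ∑' d : ℕ, ((d : ℝ) ^ 6)⁻¹) := by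
      refine add_le_add hsingular ?_
      convert! hcount using 3
      ring
    _ = _ := by ring

theorem stmt_16 :
    ∃ K : ℝ, 0 < K ∧ ∀ (p : ℕ), p.Prime → 5 ≤ p → ∀ (X : ℝ), (p : ℝ) ^ 6 ≤ X →
      |({AB ∈ Efam X | (p : ℤ) ∣ AB.1 ∧ (p : ℤ) ∣ AB.2 ∧ ¬ (p : ℤ) ^ 2 ∣ AB.2}.ncard : ℝ)
          - (1 / (p : ℝ) ^ 2) * (1 - 1 / (p : ℝ)) * ((p : ℝ) ^ 10 / ((p : ℝ) ^ 10 - 1))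
            * (4 / (riemannZeta 10).re) * X ^ ((5 : ℝ) / 6)|
        ≤ K * X ^ ((1 : ℝ) / 2) := by
  obtain ⟨K, hK, h⟩ := stmt_16_general
  exact ⟨K, hK, fun p hp _ X hX ↦ h p hp X (le_trans (by positivity) hX)⟩
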